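/- Define the rational sequence B_n by B_0 = 0 and, for n ≥ 1, B_n = ∑_{ℓ=0}^n (binom(n,ℓ))² (binom(n+ℓ,ℓ))² · ( ∑_{m=1}^n 1/m³ − ∑_{m=1}^ℓ (−1)^m / (2 m³ binom(n,m) binom(n+m,m)) ). Then B_1 = 6, and for every integer n ≥ 1, (n+1)³·B_{n+1} + n³·B_{n−1} = (34n³ + 51n² + 27n + 5)·B_n. -/

import Mathlib

/-- The second Apéry sequence
`B_n = ∑_{ℓ=0}^n binom(n,ℓ)² binom(n+ℓ,ℓ)² (∑_{m=1}^n 1/m³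
        - ∑_{m=1}^ℓ (-1)^m /(2m³ binom(n,m) binom(n+m,m)))` (with `B_0 = 0`). -/
noncomputable def aperyB (n : ℕ) : ℚ :=
  ∑ ℓ ∈ Finset.range (n + 1),
    ((n.choose ℓ : ℚ)) ^ 2 * (((n + ℓ).choose ℓ : ℚ)) ^ 2 *
      ((∑ m ∈ Finset.Icc 1 n, (1 : ℚ) / (m : ℚ) ^ 3) -
        ∑ m ∈ Finset.Icc 1 ℓ,
          (-1 : ℚ) ^ m / (2 * (m : ℚ) ^ 3 * (n.choose m : ℚ) * ((n + m).choose m : ℚ)))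

/-!
Write `T n k = binom(n,k) binom(n+k,k)` and `c n k` for the inner bracket, so that
`B_n = ∑ₖ T n k ² c n k`. By Zagier's creative telescoping (see van der Poorten, *A proof that
Euler missed…*), Apéry's operator applied in `n` to `T n k ²` is the difference in `k` of an
explicit multiple of `T n k ²`. Every difference of values of `c` near `(n, k)` is
`(-1) ^ k / T n k` times a rational function, so applying the operator to `T n k ² c n k` produces,
besides that telescoping part multiplied by `c`, only terms linear in `T n k`, and these telescope
as well. Since `T n k = 0` for `k > n`, the sum over all `k` vanishes.
-/

section CommRing

variable {R : Type*} [CommRing R]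

lemma cast_sub_mul_choose_succ_left (n k : ℕ) :
    ((n : R) + 1 - k) * ((n + 1).choose k : R) = (n + 1) * (n.choose k : R) := by
  rcases le_or_gt k (n + 1) with hk | hk
  · have h := congrArg (Nat.cast : ℕ → R) (Nat.choose_mul_succ_eq n k)
    push_cast [Nat.cast_sub hk] at h
    linear_combination -h
  · simp [Nat.choose_eq_zero_of_lt hk, Nat.choose_eq_zero_of_lt (Nat.lt_of_succ_lt hk)]

lemma cast_mul_choose_succ_right (n k : ℕ) :
    ((k : R) + 1) * (n.choose (k + 1) : R) = (n - k) * (n.choose k : R) := by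
  rcases le_or_gt k n with hk | hk
  · have h := congrArg (Nat.cast : ℕ → R) (Nat.choose_succ_right_eq n k)
    push_cast [Nat.cast_sub hk] at h
    linear_combination h
  · simp [Nat.choose_eq_zero_of_lt hk, Nat.choose_eq_zero_of_lt (Nat.lt_succ_of_lt hk)]

/-- The difference operator of Apéry's recursion, shifted by one so that no index is subtracted:
`aperyOp u n = 0` is the recursion at `n + 1`. -/
def aperyOp (u : ℕ → R) (n : ℕ) : R :=
  (n + 2) ^ 3 * u (n + 2)
    - (34 * (n + 1) ^ 3 + 51 * (n + 1) ^ 2 + 27 * (n + 1) + 5) * u (n + 1)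
    + (n + 1) ^ 3 * u n

lemma aperyOp_sum {ι : Type*} (s : Finset ι) (f : ℕ → ι → R) (n : ℕ) :
    aperyOp (fun m => ∑ i ∈ s, f m i) n = ∑ i ∈ s, aperyOp (fun m => f m i) n := by
  simp only [aperyOp, Finset.sum_add_distrib, Finset.sum_sub_distrib, Finset.mul_sum]

end CommRing

section AperyBinom

/-- The product `binom(n,k) binom(n+k,k)`, whose square is the weight of the `k`-th summand of
`aperyB n`. -/
def aperyBinom (n k : ℕ) : ℚ :=
  (n.choose k : ℚ) * ((n + k).choose k : ℚ)

@[simp]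
lemma aperyBinom_zero_right (n : ℕ) : aperyBinom n 0 = 1 := by
  simp [aperyBinom]

lemma aperyBinom_eq_zero_of_lt {n k : ℕ} (h : n < k) : aperyBinom n k = 0 := by
  simp [aperyBinom, Nat.choose_eq_zero_of_lt h]

lemma aperyBinom_pos {n k : ℕ} (h : k ≤ n) : 0 < aperyBinom n k := by
  have hn : 0 < n.choose k := Nat.choose_pos h
  have hnk : 0 < (n + k).choose k := Nat.choose_pos (Nat.le_add_left k n)
  unfold aperyBinom
  positivity

lemma aperyBinom_succ_left (n k : ℕ) :
    ((n : ℚ) + 1 - k) * aperyBinom (n + 1) k = (n + k + 1) * aperyBinom n k := by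
  have h₁ := cast_sub_mul_choose_succ_left (R := ℚ) n k
  have h₂ := cast_sub_mul_choose_succ_left (R := ℚ) (n + k) k
  rw [Nat.add_right_comm n k 1] at h₂
  push_cast at h₂
  have hn : (n : ℚ) + 1 ≠ 0 := by positivity
  unfold aperyBinom
  apply mul_left_cancel₀ hn
  linear_combination ((n : ℚ) + 1) * ((n + 1 + k).choose k : ℚ) * h₁
    + ((n : ℚ) + 1) * n.choose k * h₂

lemma aperyBinom_succ_right (n k : ℕ) :
    aperyBinom n (k + 1) = (n - k) * (n + k + 1) * aperyBinom n k / ((k : ℚ) + 1) ^ 2 := by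
  have h₁ := cast_mul_choose_succ_right (R := ℚ) n k
  have h₂ : ((n : ℚ) + k + 1) * ((n + k).choose k : ℚ)
      = ((n + (k + 1)).choose (k + 1) : ℚ) * (k + 1) :=
    mod_cast Nat.add_one_mul_choose_eq (n + k) k
  rw [eq_div_iff (by positivity)]
  unfold aperyBinom
  linear_combination (((n + (k + 1)).choose (k + 1) : ℚ) * (k + 1)) * h₁
    - (n.choose k * ((n : ℚ) - k)) * h₂

lemma aperyBinom_succ_succ (n k : ℕ) :
    aperyBinom (n + 1) (k + 1)
      = (n + k + 1) * (n + k + 2) * aperyBinom n k / ((k : ℚ) + 1) ^ 2 := by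
  rw [aperyBinom_succ_right]
  push_cast
  congr 1
  linear_combination ((n : ℚ) + k + 2) * aperyBinom_succ_left n k

lemma aperyBinom_succ_right_eq_mul_succ_left (n k : ℕ) :
    aperyBinom n (k + 1)
      = (n - k) * (n - k + 1) * aperyBinom (n + 1) k / ((k : ℚ) + 1) ^ 2 := by
  rw [aperyBinom_succ_right]
  congr 1
  linear_combination -((n : ℚ) - k) * aperyBinom_succ_left n k

end AperyBinom

section ZetaThreeApprox

/-- The bracket `c_{n,k}` in the `k`-th summand of `aperyB n`, an approximation to `ζ(3)`. It is
meaningful for `k ≤ n` only: for `m > n` the summand of the second sum is a division by zero. -/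
def zetaThreeApprox (n k : ℕ) : ℚ :=
  (∑ m ∈ Finset.Icc 1 n, (1 : ℚ) / (m : ℚ) ^ 3) -
    ∑ m ∈ Finset.Icc 1 k, (-1 : ℚ) ^ m / (2 * (m : ℚ) ^ 3 * aperyBinom n m)

lemma zetaThreeApprox_succ_right (n k : ℕ) :
    zetaThreeApprox n (k + 1)
      = zetaThreeApprox n k + (-1) ^ k / (2 * ((k : ℚ) + 1) ^ 3 * aperyBinom n (k + 1)) := by
  unfold zetaThreeApprox
  rw [Finset.sum_Icc_succ_top (Nat.le_add_left 1 k)]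
  push_cast
  ring

lemma zetaThreeApprox_succ_zero (n : ℕ) :
    zetaThreeApprox (n + 1) 0 = zetaThreeApprox n 0 + 1 / ((n : ℚ) + 1) ^ 3 := by
  simp [zetaThreeApprox, Finset.sum_Icc_succ_top]

lemma zetaThreeApprox_succ_left {n k : ℕ} (h : k ≤ n) :
    zetaThreeApprox (n + 1) k = zetaThreeApprox n k
      + (-1) ^ k / (((n : ℚ) + 1) ^ 2 * (n + k + 1) * aperyBinom n k) := by
  induction k with
  | zero =>
    rw [zetaThreeApprox_succ_zero, aperyBinom_zero_right]
    push_cast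
    ring
  | succ k ih =>
    rw [zetaThreeApprox_succ_right, zetaThreeApprox_succ_right, ih (Nat.le_of_succ_le h)]
    have hT : 0 < aperyBinom n k := aperyBinom_pos (Nat.le_of_succ_le h)
    have hnk : (n : ℚ) - k ≠ 0 := sub_ne_zero.2 (mod_cast (Nat.lt_of_succ_le h).ne')
    rw [aperyBinom_succ_succ, aperyBinom_succ_right]
    push_cast
    field_simp
    ring

lemma sq_aperyBinom_mul_zetaThreeApprox_succ_right_sub (n k : ℕ) :
    aperyBinom n (k + 1) ^ 2 * (zetaThreeApprox n (k + 1) - zetaThreeApprox n k)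
      = (-1) ^ k / (2 * ((k : ℚ) + 1) ^ 3) * aperyBinom n (k + 1) := by
  rw [zetaThreeApprox_succ_right]
  by_cases hT : aperyBinom n (k + 1) = 0
  · simp [hT]
  · field_simp
    ring

lemma sq_aperyBinom_mul_zetaThreeApprox_succ_succ_sub (n k : ℕ) :
    aperyBinom (n + 1) (k + 1) ^ 2 * (zetaThreeApprox (n + 1) (k + 1) - zetaThreeApprox n k)
      = (-1) ^ k * (((n : ℚ) + 1) ^ 2 + 2 * (n + 1) * (k + 1) + 2 * (k + 1) ^ 2)
        / (2 * ((k : ℚ) + 1) ^ 3 * (n + 1) ^ 2) * aperyBinom (n + 1) (k + 1) := by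
  rcases lt_or_ge n k with hk | hk
  · simp [aperyBinom_eq_zero_of_lt (Nat.succ_lt_succ hk)]
  · have hT : 0 < aperyBinom n k := aperyBinom_pos hk
    rw [zetaThreeApprox_succ_right, zetaThreeApprox_succ_left hk, aperyBinom_succ_succ]
    field_simp
    ring

lemma sq_aperyBinom_mul_zetaThreeApprox_succ_right_sub_succ_left (n k : ℕ) :
    aperyBinom n (k + 1) ^ 2 * (zetaThreeApprox n (k + 1) - zetaThreeApprox (n + 1) k)
      = (-1) ^ k * (((n : ℚ) + 1) ^ 2 - 2 * (n + 1) * (k + 1) + 2 * (k + 1) ^ 2)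
        / (2 * ((k : ℚ) + 1) ^ 3 * (n + 1) ^ 2) * aperyBinom n (k + 1) := by
  rcases lt_or_ge n k with hk | hk
  · simp [aperyBinom_eq_zero_of_lt (Nat.lt_succ_of_lt hk)]
  · have hT : 0 < aperyBinom n k := aperyBinom_pos hk
    have hstep := sq_aperyBinom_mul_zetaThreeApprox_succ_right_sub n k
    rw [mul_sub] at hstep ⊢
    rw [zetaThreeApprox_succ_left hk, eq_add_of_sub_eq hstep, aperyBinom_succ_right]
    field_simp
    ring

end ZetaThreeApprox

section Certificates

/-- Zagier's certificate: its difference in `k` is `aperyOp` applied to `aperyBinom · k ^ 2`. -/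
def sqCertificate (n k : ℕ) : ℚ :=
  4 * (2 * n + 1) * (k * (2 * k + 1) - (2 * n + 1) ^ 2) * aperyBinom n k ^ 2

/-- The part of the certificate for `aperyB` that is linear in `aperyBinom`; it makes up for the
variation of `zetaThreeApprox`. At `n = 0` it is a division by zero, but only positive `n`
occur. -/
def linearCertificate (n k : ℕ) : ℚ :=
  -(5 * (2 * n + 1) * (-1) ^ k * k / (n * (n + 1)) * aperyBinom n k)

/-- The certificate for `aperyB`: its difference in `k` is `aperyOp` applied to the `k`-th
summand. -/
def aperyCertificate (n k : ℕ) : ℚ :=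
  sqCertificate n k * zetaThreeApprox n k + linearCertificate n k

lemma aperyCertificate_eq_zero_of_lt {n k : ℕ} (h : n < k) : aperyCertificate n k = 0 := by
  simp [aperyCertificate, sqCertificate, linearCertificate, aperyBinom_eq_zero_of_lt h]

variable (n k : ℕ)

lemma aperyOp_sq_aperyBinom_succ :
    aperyOp (fun m => aperyBinom m (k + 1) ^ 2) n
      = sqCertificate (n + 1) (k + 1) - sqCertificate (n + 1) k := by
  simp only [aperyOp, sqCertificate]
  rw [aperyBinom_succ_succ (n + 1), aperyBinom_succ_right (n + 1),
    aperyBinom_succ_right_eq_mul_succ_left n]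
  push_cast
  field_simp
  ring

/-- Abel summation of `sqCertificate * zetaThreeApprox` in `k` leaves exactly these terms. -/
lemma aperyOp_sq_aperyBinom_mul_sub_zetaThreeApprox :
    aperyOp (fun m => aperyBinom m (k + 1) ^ 2 *
          (zetaThreeApprox m (k + 1) - zetaThreeApprox (n + 1) k)) n
        - sqCertificate (n + 1) (k + 1) *
          (zetaThreeApprox (n + 1) (k + 1) - zetaThreeApprox (n + 1) k)
      = linearCertificate (n + 1) (k + 1) - linearCertificate (n + 1) k := by
  have hΔupper := sq_aperyBinom_mul_zetaThreeApprox_succ_succ_sub (n + 1) k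
  have hΔmiddle := sq_aperyBinom_mul_zetaThreeApprox_succ_right_sub (n + 1) k
  have hΔlower := sq_aperyBinom_mul_zetaThreeApprox_succ_right_sub_succ_left n k
  simp only [aperyOp, sqCertificate, linearCertificate]
  rw [hΔupper, mul_assoc _ (_ ^ 2) (_ - _), hΔmiddle, hΔlower,
    aperyBinom_succ_succ (n + 1), aperyBinom_succ_right (n + 1),
    aperyBinom_succ_right_eq_mul_succ_left n, pow_succ]
  push_cast
  field_simp
  ring

lemma aperyOp_summand_succ :
    aperyOp (fun m => aperyBinom m (k + 1) ^ 2 * zetaThreeApprox m (k + 1)) n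
      = aperyCertificate (n + 1) (k + 1) - aperyCertificate (n + 1) k := by
  have hsq := aperyOp_sq_aperyBinom_succ n k
  have hlinear := aperyOp_sq_aperyBinom_mul_sub_zetaThreeApprox n k
  simp only [aperyOp, aperyCertificate] at *
  linear_combination zetaThreeApprox (n + 1) k * hsq + hlinear

lemma aperyOp_summand_zero :
    aperyOp (fun m => aperyBinom m 0 ^ 2 * zetaThreeApprox m 0) n
      = aperyCertificate (n + 1) 0 := by
  simp only [aperyOp, aperyCertificate, sqCertificate, linearCertificate, aperyBinom_zero_right,
    zetaThreeApprox_succ_zero]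
  push_cast
  field_simp
  ring

lemma sum_range_aperyOp_summand :
    ∑ i ∈ Finset.range (k + 1),
        aperyOp (fun m => aperyBinom m i ^ 2 * zetaThreeApprox m i) n
      = aperyCertificate (n + 1) k := by
  rw [Finset.sum_range_succ', aperyOp_summand_zero]
  simp only [aperyOp_summand_succ]
  rw [Finset.sum_range_sub, sub_add_cancel]

end Certificates

lemma aperyB_eq_sum_range {n N : ℕ} (h : n < N) :
    aperyB n = ∑ k ∈ Finset.range N, aperyBinom n k ^ 2 * zetaThreeApprox n k := by
  have hsupport : ∀ k ∈ Finset.range N, k ∉ Finset.range (n + 1) →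
      aperyBinom n k ^ 2 * zetaThreeApprox n k = 0 := by
    intro k _ hk
    rw [aperyBinom_eq_zero_of_lt (by simpa using hk)]
    ring
  rw [← Finset.sum_subset (Finset.range_subset_range.2 h) hsupport]
  simp only [aperyB, aperyBinom, zetaThreeApprox, mul_pow, mul_assoc]

lemma aperyOp_aperyB (n : ℕ) : aperyOp aperyB n = 0 := by
  have hsum : aperyOp aperyB n = aperyOp (fun m => ∑ k ∈ Finset.range (n + 3),
      aperyBinom m k ^ 2 * zetaThreeApprox m k) n := by
    simp only [aperyOp]
    rw [aperyB_eq_sum_range (show n < n + 3 by lia),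
      aperyB_eq_sum_range (show n + 1 < n + 3 by lia),
      aperyB_eq_sum_range (show n + 2 < n + 3 by lia)]
  rw [hsum, aperyOp_sum, sum_range_aperyOp_summand,
    aperyCertificate_eq_zero_of_lt (Nat.lt_succ_self (n + 1))]

lemma aperyB_one : aperyB 1 = 6 := by
  norm_num [aperyB, Finset.sum_range_succ]

/-- Apéry's recursion for the sequence `B_n`: `B_1 = 6` and
`(n+1)³ B_{n+1} - (34n³+51n²+27n+5) B_n + n³ B_{n-1} = 0` for `n ≥ 1`. -/
theorem aperyB_recursion :
    aperyB 1 = 6 ∧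
    ∀ n : ℕ, 1 ≤ n →
      ((n : ℚ) + 1) ^ 3 * aperyB (n + 1) + (n : ℚ) ^ 3 * aperyB (n - 1)
        = (34 * (n : ℚ) ^ 3 + 51 * (n : ℚ) ^ 2 + 27 * (n : ℚ) + 5) * aperyB n := by
  refine ⟨aperyB_one, fun n hn => ?_⟩
  obtain ⟨m, rfl⟩ := Nat.exists_eq_add_of_le' hn
  have hrec : aperyOp aperyB m = 0 := aperyOp_aperyB m
  rw [aperyOp] at hrec
  rw [Nat.add_sub_cancel]
  push_cast
  linear_combination hrec
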